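/- arXiv:0903.4508 — 2 statements merged into one kernel-verified Lean document; each statement's English description precedes it below -/
import Mathlib

section
/- With the weighted uniform initial qubit φ^WU, the walk is covariant under the cyclic letter shift: let σ(g) be the reduced word obtained from g by replacing every letter l with l+1 (mod κ). Then for all t ≥ 0, all reduced words g and all letters j, α_t(σ(g), j+1 mod κ) = ω·α_t(g, j). -/
noncomputable section

/-- Left multiplication of a reduced word by a letter:
`j · g` removes the first letter if it equals `j`, otherwise prepends `j`. -/
def lmul (j : ℕ) (g : List ℕ) : List ℕ :=
  match g with
  | [] => [j]
  | k :: rest => if k = j then rest else j :: k :: rest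

/-- `g` is a reduced word over the alphabet `{0, …, κ-1}`:
all letters are `< κ` and no two consecutive letters are equal. -/
def WordReduced (κ : ℕ) (g : List ℕ) : Prop :=
  (∀ l ∈ g, l < κ) ∧ g.Chain' (· ≠ ·)

/-- Grover-walk amplitudes on the Cayley tree with initial qubit `φ`:
`alpha κ φ 0 g j = φ j` if `g = e` and `0` otherwise, and
`alpha κ φ (t+1) g j = ∑_{k<κ} (2/κ - δ_{jk}) · alpha κ φ t (j·g) k`. -/
noncomputable def alpha (κ : ℕ) (φ : ℕ → ℂ) : ℕ → List ℕ → ℕ → ℂ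
  | 0, g, j => if g = [] then φ j else 0
  | t + 1, g, j =>
      ∑ k ∈ Finset.range κ, ((2 / (κ : ℂ)) - (if j = k then 1 else 0)) * alpha κ φ t (lmul j g) k

/-- `ω = exp(2πi/κ)`. -/
noncomputable def omega (κ : ℕ) : ℂ := Complex.exp (2 * Real.pi * Complex.I / κ)

/-- The weighted uniform initial qubit `φ^WU(j) = ω^j/√κ`. -/
noncomputable def phiWU (κ : ℕ) : ℕ → ℂ := fun j => omega κ ^ j / ((Real.sqrt κ : ℝ) : ℂ)

theorem shift_inj (κ a b : ℕ) (ha : a < κ) (hb : b < κ) :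
    (a + 1) % κ = (b + 1) % κ ↔ a = b := by
  constructor
  · intro h
    have h2 : a ≡ b [MOD κ] := Nat.ModEq.add_right_cancel' 1 h
    exact Nat.ModEq.eq_of_lt_of_lt h2 ha hb
  · rintro rfl
    rfl

theorem omega_pow_card (κ : ℕ) (hκ : 3 ≤ κ) : omega κ ^ κ = 1 := by
  unfold omega
  exact (Complex.isPrimitiveRoot_exp κ (by omega)).pow_eq_one

theorem sum_shift (κ : ℕ) (hκ : 3 ≤ κ) (f : ℕ → ℂ) :
    ∑ k ∈ Finset.range κ, f k = ∑ k ∈ Finset.range κ, f ((k + 1) % κ) := by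
  obtain ⟨n, rfl⟩ : ∃ n, κ = n + 1 := ⟨κ - 1, by omega⟩
  rw [Finset.sum_range_succ', Finset.sum_range_succ (fun k => f ((k + 1) % (n + 1)))]
  rw [Nat.mod_self]
  congr 1
  refine Finset.sum_congr rfl fun k hk => ?_
  have := Finset.mem_range.1 hk
  rw [Nat.mod_eq_of_lt (by omega)]

theorem lmul_shift (κ : ℕ) (g : List ℕ) (j : ℕ) (hg : ∀ l ∈ g, l < κ) (hj : j < κ) :
    lmul ((j + 1) % κ) (g.map fun l => (l + 1) % κ)
      = (lmul j g).map fun l => (l + 1) % κ := by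
  cases g with
  | nil => rfl
  | cons k r =>
    have hk : k < κ := hg k (by simp)
    simp only [lmul, List.map_cons, shift_inj κ k j hk hj]
    split_ifs <;> simp

theorem lmul_lt (κ : ℕ) (g : List ℕ) (j : ℕ) (hg : ∀ l ∈ g, l < κ) (hj : j < κ) :
    ∀ l ∈ lmul j g, l < κ := by
  cases g with
  | nil => simpa [lmul] using hj
  | cons k r =>
    simp only [lmul]
    split_ifs
    · exact fun l hl => hg l (List.mem_cons_of_mem _ hl)
    · intro l hl
      rcases List.mem_cons.1 hl with rfl | h
      · exact hj
      · exact hg l h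

theorem shift_aux (κ : ℕ) (hκ : 3 ≤ κ) (t : ℕ) : ∀ (g : List ℕ) (j : ℕ)
    (_ : ∀ l ∈ g, l < κ) (_ : j < κ),
    alpha κ (phiWU κ) t (g.map fun l => (l + 1) % κ) ((j + 1) % κ)
      = omega κ * alpha κ (phiWU κ) t g j := by
  induction t with
  | zero =>
    intro g j hg hj
    simp only [alpha, List.map_eq_nil_iff]
    split_ifs
    · have : omega κ ^ ((j + 1) % κ) = omega κ ^ (j + 1) :=
        (pow_eq_pow_mod (j + 1) (omega_pow_card κ hκ)).symm
      simp only [phiWU, this]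
      ring
    · simp
  | succ t ih =>
    intro g j hg hj
    simp only [alpha]
    rw [lmul_shift κ g j hg hj, sum_shift κ hκ, Finset.mul_sum]
    refine Finset.sum_congr rfl fun k hk => ?_
    have hk' := Finset.mem_range.1 hk
    rw [ih _ k (lmul_lt κ g j hg hj) hk']
    simp only [shift_inj κ j k hj hk']
    ring

/-- With the weighted uniform initial qubit `φ^WU`, the walk is covariant
under the cyclic letter shift `l ↦ l + 1 (mod κ)`:
`α_t(σ(g), j+1 mod κ) = ω · α_t(g, j)`. -/
theorem grover_tree_weighted_shift_covariance
    (κ : ℕ) (hκ : 3 ≤ κ) (t : ℕ) (g : List ℕ) (j : ℕ)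
    (hg : WordReduced κ g) (hj : j < κ) :
    alpha κ (phiWU κ) t (g.map fun l => (l + 1) % κ) ((j + 1) % κ)
      = omega κ * alpha κ (phiWU κ) t g j := by
  exact shift_aux κ hκ t g j hg.1 hj

end
end

section
/- The function f_κ is a probability density: for every integer κ ≥ 3, with a = 2√(κ−1)/κ, ∫_0^a (κ−2)·x² / (π·(1−x²)·√(a²−x²)) dx = 1. -/
theorem konno_aux (a b : ℝ) (ha0 : 0 < a) (ha1 : a < 1) (hb : 0 < b) (hab : b ^ 2 = 1 - a ^ 2)
    (c : ℝ) (hc : 0 ≤ c) :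
    ∫ x in (0 : ℝ)..a,
      c * x ^ 2 / (Real.pi * (1 - x ^ 2) * Real.sqrt (a ^ 2 - x ^ 2))
        = c / Real.pi * (Real.pi / 2 * (1 / b - 1)) := by
  set F : ℝ → ℝ := fun x => c / Real.pi *
    (1 / b * Real.arcsin (b * x / (a * Real.sqrt (1 - x ^ 2))) - Real.arcsin (x / a)) with hF
  have hpi := Real.pi_pos
  have hcont : ContinuousOn F (Set.Icc 0 a) := by
    have h1 : ContinuousOn (fun x : ℝ => b * x / (a * Real.sqrt (1 - x ^ 2))) (Set.Icc 0 a) := by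
      apply ContinuousOn.div (by fun_prop) (by fun_prop)
      intro x hx
      have : 0 < 1 - x ^ 2 := by nlinarith [hx.1, hx.2]
      have := Real.sqrt_pos.2 this
      positivity
    have h2 := Real.continuous_arcsin.comp_continuousOn h1
    have h3 : Continuous (fun x : ℝ => Real.arcsin (x / a)) :=
      Real.continuous_arcsin.comp (by fun_prop)
    exact continuousOn_const.mul ((continuousOn_const.mul h2).sub h3.continuousOn)
  have hderiv : ∀ x ∈ Set.Ioo 0 a, HasDerivAt F
      (c * x ^ 2 / (Real.pi * (1 - x ^ 2) * Real.sqrt (a ^ 2 - x ^ 2))) x := by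
    intro x hx
    obtain ⟨hx0, hxa⟩ := hx
    have hp : 0 < 1 - x ^ 2 := by nlinarith
    have hq : 0 < a ^ 2 - x ^ 2 := by nlinarith
    have hs := Real.sqrt_pos.2 hp
    have ht := Real.sqrt_pos.2 hq
    have hs2 := Real.sq_sqrt hp.le
    have ht2 := Real.sq_sqrt hq.le
    have hsd : HasDerivAt (fun x : ℝ => Real.sqrt (1 - x ^ 2))
        (-(2 * x) / (2 * Real.sqrt (1 - x ^ 2))) x := by
      have : HasDerivAt (fun x : ℝ => 1 - x ^ 2) (-(2 * x)) x := by
        simpa using (hasDerivAt_pow 2 x).const_sub 1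
      exact this.sqrt hp.ne'
    set s := Real.sqrt (1 - x ^ 2) with hsdef
    set t := Real.sqrt (a ^ 2 - x ^ 2) with htdef
    have e1 : Real.sqrt (1 - (b * x / (a * s)) ^ 2) = t / (a * s) := by
      rw [Real.sqrt_eq_iff_mul_self_eq_of_pos (by positivity)]
      field_simp
      rw [ht2, hs2, hab]; ring
    have e2 : Real.sqrt (1 - (x / a) ^ 2) = t / a := by
      rw [Real.sqrt_eq_iff_mul_self_eq_of_pos (by positivity)]
      field_simp
      rw [ht2]
    have n1 : 0 < 1 - (b * x / (a * s)) ^ 2 := by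
      apply Real.sqrt_pos.1; rw [e1]; positivity
    have n2 : 0 < 1 - (x / a) ^ 2 := by
      apply Real.sqrt_pos.1; rw [e2]; positivity
    have hy : HasDerivAt (fun x : ℝ => b * x / (a * Real.sqrt (1 - x ^ 2)))
        (b / (a * s ^ 3)) x := by
      have := ((hasDerivAt_id x).const_mul b).div (hsd.const_mul a) (by positivity)
      refine HasDerivAt.congr_deriv this ?_
      simp only [id]
      rw [← hsdef]
      field_simp
      rw [hs2]; ring
    have g1 := (Real.hasDerivAt_arcsin (x := b * x / (a * s)) (by intro h; rw [h] at n1; norm_num at n1)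
      (by intro h; rw [h] at n1; norm_num at n1)).comp x hy
    have g2 := (Real.hasDerivAt_arcsin (x := x / a) (by intro h; rw [h] at n2; norm_num at n2)
      (by intro h; rw [h] at n2; norm_num at n2)).comp x ((hasDerivAt_id x).div_const a)
    have := ((g1.const_mul (1 / b)).sub g2).const_mul (c / Real.pi)
    refine HasDerivAt.congr_deriv this ?_
    rw [e1, e2, ← hs2]
    field_simp
    rw [hs2]; ring
  have hint := intervalIntegral.integrableOn_deriv_of_nonneg hcont hderiv (by
    intro x hx
    have hp : 0 < 1 - x ^ 2 := by nlinarith [hx.1, hx.2]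
    positivity)
  rw [intervalIntegral.integral_eq_sub_of_hasDerivAt_of_le ha0.le hcont hderiv
    ((intervalIntegrable_iff_integrableOn_Ioc_of_le ha0.le).2 hint)]
  have hbs : Real.sqrt (1 - a ^ 2) = b := by rw [← hab, Real.sqrt_sq hb.le]
  have h1 : b * a / (a * b) = 1 := by field_simp
  simp only [hF, hbs, h1, div_self ha0.ne', Real.arcsin_one]
  simp
  left; ring

/-- The function `f_κ` is a probability density: for every integer
`κ ≥ 3`, with `a = 2√(κ−1)/κ`,
`∫_0^a (κ−2)·x² / (π·(1−x²)·√(a²−x²)) dx = 1`. -/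
theorem konno_weighted_density_integral_eq_one
    (κ : ℕ) (hκ : 3 ≤ κ) (a : ℝ) (ha : a = 2 * Real.sqrt ((κ : ℝ) - 1) / κ) :
    ∫ x in (0 : ℝ)..a,
      ((κ : ℝ) - 2) * x ^ 2 / (Real.pi * (1 - x ^ 2) * Real.sqrt (a ^ 2 - x ^ 2)) = 1 := by
  have hk : (3 : ℝ) ≤ κ := by exact_mod_cast hκ
  have h2 : (0 : ℝ) < κ - 2 := by linarith
  have hk0 : (0 : ℝ) < κ := by linarith
  have h1 : (0 : ℝ) < κ - 1 := by linarith
  have hs := Real.sqrt_pos.2 h1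
  have ha0 : 0 < a := by rw [ha]; positivity
  have hab : (((κ : ℝ) - 2) / κ) ^ 2 = 1 - a ^ 2 := by
    rw [ha, div_pow, div_pow, mul_pow, Real.sq_sqrt h1.le]
    field_simp
    ring
  have hb : 0 < ((κ : ℝ) - 2) / κ := by positivity
  have ha1 : a < 1 := by nlinarith [pow_pos hb 2]
  rw [konno_aux a _ ha0 ha1 hb hab _ h2.le]
  have := Real.pi_pos
  field_simp
  ring
end
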